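/- arXiv:1007.1771 — 2 statements merged into one kernel-verified Lean document; each statement's English description precedes it below -/
import Mathlib

section
/- Assume in addition that M'(β*) ≤ s' and that min{ |Ψ_{jj}·β*_j| : β*_j ≠ 0 } > ( 3/2 + (16s'/κ'²)·max_{j≠k}|Ψ_{jk}| )·r, where Ψ_{jk} denotes the (j,k)-entry of Ψ = XᵀX/N. Then with probability at least 1 − K^{1−A²/8}, every Lasso solution β̂^L satisfies M'(β̂^L) ≥ M'(β*). -/
/-!
On the event that every column of `X` satisfies `|⟨X_j, W⟩| / N ≤ r / 2`, the support of `β*` is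
contained in the support of every Lasso solution `b`, which is stronger than the comparison of
cardinalities.

*Deterministic part.* Write `Δ = b - β*` and `J` for the support of `β*`. Comparing the objective at
`b` and at `β*` gives `‖XΔ‖² / N + r ‖Δ‖₁ ≤ 4 r ∑_{j ∈ J} |Δ_j|` (`basic_ineq`). So `Δ` lies in the
cone of the Restricted Eigenvalue condition, and that condition together with Cauchy-Schwarz yields
`‖Δ‖₁ ≤ 4 s' r / κ'²` (`l1_bound`). Optimality of `b` along the coordinate axes gives
`|X_jᵀ(Xb - y)| / N ≤ r` (`kkt`), hence `|(ΨΔ)_j| ≤ 3 r / 2` on the event. If `β*_j ≠ 0` and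
`b_j = 0`, then `Δ_j = -β*_j`, and isolating the diagonal term of `(ΨΔ)_j` bounds `|Ψ_jj β*_j|` by
`3 r / 2 + max |Ψ_jk| ‖Δ‖₁`, against the lower bound assumed on `|Ψ_jj β*_j|`.

*Probabilistic part.* `⟨X_j, W⟩` is a centred Gaussian of variance at most `N φ σ²`
(`map_sum_gaussian`). The two-sided tail bound `P(|Z| > t) ≤ exp(-t² / (2v))`, with constant one
(`gaussian_tail`), and a union bound over the `K` columns give exactly `K ^ (1 - A² / 8)`. The
constant one comes from shifting the half-line: the density at `x + t` is at most
`exp(-t² / (2v))` times the density at `x` for `x > 0`, and a half-line has mass at most `1 / 2`.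
-/

open MeasureTheory ProbabilityTheory Finset

noncomputable section

namespace Lasso

/-- The Lasso objective `(1/N)‖Xβ − y‖² + 2r‖β‖₁`. -/
def lassoObj {N K : ℕ} (X : Matrix (Fin N) (Fin K) ℝ) (y : Fin N → ℝ) (r : ℝ)
    (β : Fin K → ℝ) : ℝ :=
  (∑ i, (X.mulVec β i - y i) ^ 2) / N + 2 * r * ∑ j, |β j|

/-- `b` is a Lasso solution. -/
def IsLassoSol {N K : ℕ} (X : Matrix (Fin N) (Fin K) ℝ) (y : Fin N → ℝ) (r : ℝ)
    (b : Fin K → ℝ) : Prop :=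
  ∀ β : Fin K → ℝ, lassoObj X y r b ≤ lassoObj X y r β

/-- The `(j,k)`-entry of `Ψ = XᵀX/N`. -/
def PsiEnt {N K : ℕ} (X : Matrix (Fin N) (Fin K) ℝ) (j k : Fin K) : ℝ :=
  (∑ i, X i j * X i k) / N

/-- The maximal diagonal element `φ` of `Ψ = XᵀX/N`. -/
def phiDiag {N K : ℕ} (X : Matrix (Fin N) (Fin K) ℝ) : ℝ :=
  sSup {x | ∃ j, x = PsiEnt X j j}

/-- The maximal eigenvalue `φ_max` of `Ψ = XᵀX/N`, expressed as the supremum of the quadratic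
form over unit vectors. -/
def phiMax {N K : ℕ} (X : Matrix (Fin N) (Fin K) ℝ) : ℝ :=
  sSup {x | ∃ v : Fin K → ℝ, (∑ k, (v k) ^ 2 = 1) ∧ x = (∑ i, (X.mulVec v i) ^ 2) / N}

/-! ### Gaussian tails and the law of the column scores -/

lemma gaussian_Ioi (v : NNReal) (hv : v ≠ 0) (t : ℝ) (ht : 0 ≤ t) :
    gaussianReal 0 v (Set.Ioi t) ≤
      ENNReal.ofReal (Real.exp (-t ^ 2 / (2 * v))) * gaussianReal 0 v (Set.Ioi 0) := by
  have h1 : gaussianReal 0 v (Set.Ioi t) = gaussianReal (0 - t) v (Set.Ioi 0) := by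
    rw [← gaussianReal_map_sub_const, Measure.map_apply (by fun_prop) measurableSet_Ioi]
    congr 1
    ext x
    simp
  rw [h1, gaussianReal_apply _ hv, gaussianReal_apply _ hv,
    ← lintegral_const_mul _ (measurable_gaussianPDF _ _)]
  refine setLIntegral_mono ((measurable_gaussianPDF _ _).const_mul _) fun x hx => ?_
  have hx0 : (0 : ℝ) < x := hx
  rw [gaussianPDF_def, gaussianPDF_def, ← ENNReal.ofReal_mul (Real.exp_pos _).le]
  refine ENNReal.ofReal_le_ofReal ?_
  simp only [gaussianPDFReal]
  rw [mul_left_comm, ← Real.exp_add]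
  refine mul_le_mul_of_nonneg_left (Real.exp_le_exp.2 ?_) (by positivity)
  have hvp : (0 : ℝ) < v := by positivity
  rw [← add_div]
  gcongr
  nlinarith [mul_nonneg hx0.le ht]

/-- Two-sided Gaussian tail bound with constant one, in terms of an upper bound `V` for the
variance; the degenerate variance `v = 0` is allowed. -/
lemma gaussian_tail (v : NNReal) (V t : ℝ) (hvV : (v : ℝ) ≤ V) (ht : 0 ≤ t) :
    gaussianReal 0 v {x | t < |x|} ≤ ENNReal.ofReal (Real.exp (-t ^ 2 / (2 * V))) := by
  by_cases hv : v = 0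
  · subst hv
    have hm : MeasurableSet {x : ℝ | t < |x|} :=
      measurableSet_lt measurable_const (by fun_prop)
    rw [gaussianReal_zero_var, Measure.dirac_apply' _ hm]
    simp [ht]
  have hvp : (0 : ℝ) < v := by positivity
  have hneg : ∀ s : ℝ, gaussianReal 0 v (Set.Iio (-s)) = gaussianReal 0 v (Set.Ioi s) := by
    intro s
    have h := gaussianReal_map_neg (μ := 0) (v := v)
    rw [neg_zero] at h
    conv_lhs => rw [← h]
    rw [Measure.map_apply (by fun_prop) measurableSet_Iio]
    congr 1
    ext x
    simp
  have hhalf : gaussianReal 0 v (Set.Ioi 0) + gaussianReal 0 v (Set.Ioi 0) ≤ 1 := by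
    nth_rewrite 1 [← hneg 0]
    rw [neg_zero, ← measure_union _ measurableSet_Ioi]
    · exact prob_le_one
    · rw [Set.disjoint_left]
      intro x hx hx'
      exact lt_asymm (Set.mem_Iio.1 hx) (Set.mem_Ioi.1 hx')
  have hset : {x : ℝ | t < |x|} ⊆ Set.Iio (-t) ∪ Set.Ioi t := by
    intro x hx
    have hx' : t < |x| := hx
    rcases lt_abs.1 hx' with h | h
    · exact Or.inr h
    · exact Or.inl (by simp only [Set.mem_Iio]; linarith)
  calc gaussianReal 0 v {x | t < |x|}
      ≤ gaussianReal 0 v (Set.Iio (-t)) + gaussianReal 0 v (Set.Ioi t) :=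
        (measure_mono hset).trans (measure_union_le _ _)
    _ = gaussianReal 0 v (Set.Ioi t) + gaussianReal 0 v (Set.Ioi t) := by rw [hneg]
    _ ≤ ENNReal.ofReal (Real.exp (-t ^ 2 / (2 * v))) *
          (gaussianReal 0 v (Set.Ioi 0) + gaussianReal 0 v (Set.Ioi 0)) := by
        rw [mul_add]
        exact add_le_add (gaussian_Ioi v hv t ht) (gaussian_Ioi v hv t ht)
    _ ≤ ENNReal.ofReal (Real.exp (-t ^ 2 / (2 * v))) := mul_le_of_le_one_right' hhalf
    _ ≤ ENNReal.ofReal (Real.exp (-t ^ 2 / (2 * V))) := by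
        refine ENNReal.ofReal_le_ofReal (Real.exp_le_exp.2 ?_)
        rw [neg_div, neg_div, neg_le_neg_iff]
        gcongr

lemma map_sum_gaussian {N : ℕ} (v : NNReal) (a : Fin N → ℝ) (s : Finset (Fin N)) :
    Measure.map (∑ i ∈ s, fun w : Fin N → ℝ => a i * w i)
      (Measure.pi fun _ : Fin N => gaussianReal 0 v) =
      gaussianReal 0 (∑ i ∈ s, .mk (a i ^ 2) (sq_nonneg _) * v) := by
  classical
  have hind : iIndepFun (fun (i : Fin N) (w : Fin N → ℝ) => a i * w i)
      (Measure.pi fun _ : Fin N => gaussianReal 0 v) :=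
    iIndepFun_pi (X := fun i x => a i * x) fun i => by fun_prop
  have hsingle : ∀ i, Measure.map (fun w : Fin N → ℝ => a i * w i)
      (Measure.pi fun _ : Fin N => gaussianReal 0 v) =
      gaussianReal 0 (.mk (a i ^ 2) (sq_nonneg _) * v) := by
    intro i
    have h := gaussianReal_map_const_mul (μ := 0) (v := v) (a i)
    rw [mul_zero, ← (measurePreserving_eval (fun _ : Fin N => gaussianReal 0 v) i).map_eq,
      Measure.map_map (by fun_prop) (by fun_prop)] at h
    exact h
  induction s using Finset.induction_on with
  | empty =>
    simp only [Finset.sum_empty, gaussianReal_zero_var]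
    change Measure.map (fun _ => (0 : ℝ)) _ = _
    simp [Measure.map_const]
  | insert i s hi ih =>
    rw [Finset.sum_insert hi, Finset.sum_insert hi, add_comm, add_comm (NNReal.mk _ _ * v)]
    have h := gaussianReal_add_gaussianReal_of_indepFun
      (hind.indepFun_finsetSum_of_notMem (fun i => by fun_prop) hi) ih (hsingle i)
    rwa [add_zero] at h

/-! ### Deterministic analysis of Lasso solutions -/

/-- Expansion of the quadratic loss at `c + d` around the residual `c`. -/
lemma sum_sq_expand {N : ℕ} (c d : Fin N → ℝ) :
    ∑ i, (c i + d i) ^ 2 = ∑ i, c i ^ 2 + 2 * ∑ i, d i * c i + ∑ i, d i ^ 2 := by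
  rw [Finset.mul_sum, ← Finset.sum_add_distrib, ← Finset.sum_add_distrib]
  exact Finset.sum_congr rfl fun i _ => by ring

lemma abs_le_of_quadratic (g P r : ℝ) (hP : 0 ≤ P)
    (h : ∀ t : ℝ, 0 ≤ 2 * t * g + t ^ 2 * P + 2 * r * |t|) : |g| ≤ r := by
  by_contra! hlt
  set ε := (|g| - r) / (P + 1) with hε
  have hεp : 0 < ε := div_pos (by linarith) (by linarith)
  have hεe : ε * (P + 1) = |g| - r := by rw [hε]; field_simp
  rcases abs_cases g with ⟨hg, _⟩ | ⟨hg, _⟩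
  · have := h (-ε)
    rw [abs_neg, abs_of_pos hεp] at this
    rw [hg] at hεe hlt
    nlinarith [mul_pos hεp hεp, mul_pos hεp (sub_pos.2 hlt)]
  · have := h ε
    rw [abs_of_pos hεp] at this
    rw [hg] at hεe hlt
    nlinarith [mul_pos hεp hεp, mul_pos hεp (sub_pos.2 hlt)]

/-- First-order optimality: the gradient of the quadratic loss at a Lasso solution is bounded by
the penalty level in every coordinate. -/
lemma kkt {N K : ℕ} (X : Matrix (Fin N) (Fin K) ℝ) (y : Fin N → ℝ) (r : ℝ) (hr : 0 ≤ r)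
    (b : Fin K → ℝ) (hb : IsLassoSol X y r b) (j : Fin K) :
    |(∑ i, X i j * (X.mulVec b i - y i)) / N| ≤ r := by
  refine abs_le_of_quadratic _ (PsiEnt X j j) r ?_ fun t => ?_
  · exact div_nonneg (Finset.sum_nonneg fun i _ => mul_self_nonneg _) (Nat.cast_nonneg _)
  have h := hb (b + Pi.single j t)
  unfold lassoObj at h
  have e1 : ∀ i, X.mulVec (b + Pi.single j t) i - y i
      = (X.mulVec b i - y i) + t * X i j := by
    intro i
    rw [Matrix.mulVec_add, Matrix.mulVec_single]
    simp
    ring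
  simp_rw [e1] at h
  rw [sum_sq_expand] at h
  have e2 : ∑ i, t * X i j * (X.mulVec b i - y i) = t * ∑ i, X i j * (X.mulVec b i - y i) := by
    rw [Finset.mul_sum]
    exact Finset.sum_congr rfl fun i _ => by ring
  have e3 : ∑ i, (t * X i j) ^ 2 = t ^ 2 * ∑ i, X i j * X i j := by
    rw [Finset.mul_sum]
    exact Finset.sum_congr rfl fun i _ => by ring
  have e4 : ∑ k, |(b + Pi.single j t : Fin K → ℝ) k| ≤ ∑ k, |b k| + |t| := by
    have : ∑ k, |(Pi.single j t : Fin K → ℝ) k| = |t| := by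
      rw [Finset.sum_eq_single j]
      · simp
      · intro k _ hk
        simp [hk]
      · simp
    rw [← this, ← Finset.sum_add_distrib]
    exact Finset.sum_le_sum fun k _ => abs_add_le _ _
  rw [e2, e3, add_div, add_div] at h
  unfold PsiEnt
  have e5 := mul_le_mul_of_nonneg_left e4 (by linarith : 0 ≤ 2 * r)
  have e6 : 2 * (t * ∑ i, X i j * (X.mulVec b i - y i)) / N
      = 2 * t * ((∑ i, X i j * (X.mulVec b i - y i)) / N) := by ring
  have e7 : t ^ 2 * (∑ i, X i j * X i j) / N = t ^ 2 * ((∑ i, X i j * X i j) / N) := by ring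
  rw [e6, e7] at h
  linarith

/-- Interchange of the two summations in `⟨XΔ, w⟩ = ⟨Δ, Xᵀw⟩`. -/
lemma sum_mulVec_mul {N K : ℕ} (X : Matrix (Fin N) (Fin K) ℝ) (Δ : Fin K → ℝ) (w : Fin N → ℝ) :
    ∑ i, X.mulVec Δ i * w i = ∑ k, Δ k * ∑ i, X i k * w i := by
  simp only [Matrix.mulVec, dotProduct, Finset.sum_mul, Finset.mul_sum]
  rw [Finset.sum_comm]
  exact Finset.sum_congr rfl fun k _ => Finset.sum_congr rfl fun i _ => by ring

/-- The oracle inequality obtained by comparing the objective at a solution and at the truth. -/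
lemma basic_ineq {N K : ℕ} (X : Matrix (Fin N) (Fin K) ℝ) (βs : Fin K → ℝ) (w : Fin N → ℝ)
    (r : ℝ) (hr : 0 ≤ r) (hw : ∀ j, |(∑ i, X i j * w i) / N| ≤ r / 2)
    (b : Fin K → ℝ) (hb : IsLassoSol X (fun i => X.mulVec βs i + w i) r b) :
    (∑ i, X.mulVec (b - βs) i ^ 2) / N + r * ∑ j, |b j - βs j| ≤
      4 * r * ∑ j ∈ Finset.univ.filter (fun j => βs j ≠ 0), |b j - βs j| := by
  have h := hb βs
  unfold lassoObj at h
  have e1 : ∀ i, X.mulVec b i - (X.mulVec βs i + w i) = -w i + X.mulVec (b - βs) i := by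
    intro i
    rw [Matrix.mulVec_sub, Pi.sub_apply]
    ring
  have e2 : ∀ i, X.mulVec βs i - (X.mulVec βs i + w i) = -w i := by
    intro i
    ring
  simp_rw [e1, e2] at h
  rw [sum_sq_expand, add_div, add_div, mul_div_assoc] at h
  have e3 : ∑ i, X.mulVec (b - βs) i * -w i = -∑ k, (b - βs) k * ∑ i, X i k * w i := by
    rw [← sum_mulVec_mul, ← Finset.sum_neg_distrib]
    exact Finset.sum_congr rfl fun i _ => by ring
  have e4 : (∑ k, (b - βs) k * ∑ i, X i k * w i) / N ≤ r / 2 * ∑ k, |b k - βs k| := by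
    rw [Finset.sum_div, Finset.mul_sum]
    refine Finset.sum_le_sum fun k _ => ?_
    rw [mul_div_assoc]
    calc _ ≤ |(b - βs) k * ((∑ i, X i k * w i) / N)| := le_abs_self _
      _ = |(∑ i, X i k * w i) / N| * |b k - βs k| := by rw [abs_mul, mul_comm, Pi.sub_apply]
      _ ≤ _ := mul_le_mul_of_nonneg_right (hw k) (abs_nonneg _)
  have e5 : ∑ j, |b j - βs j| + ∑ j, |βs j| - ∑ j, |b j| ≤
      2 * ∑ j ∈ Finset.univ.filter (fun j => βs j ≠ 0), |b j - βs j| := by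
    rw [← Finset.sum_add_distrib, ← Finset.sum_sub_distrib, Finset.mul_sum, Finset.sum_filter]
    refine Finset.sum_le_sum fun j _ => ?_
    split_ifs with hj
    · have := abs_sub_abs_le_abs_sub (βs j) (b j)
      rw [abs_sub_comm (βs j)] at this
      linarith
    · rw [ne_eq, not_not] at hj
      simp [hj]
  rw [e3, neg_div] at h
  have e6 := mul_le_mul_of_nonneg_left e5 (by linarith : 0 ≤ 2 * r)
  linarith

/-- Bound on the `ℓ¹` error under the Restricted Eigenvalue condition. -/
lemma l1_bound {N K : ℕ} (hN : 1 ≤ N)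
    (X : Matrix (Fin N) (Fin K) ℝ) (Δ : Fin K → ℝ) (J : Finset (Fin K))
    (r : ℝ) (hr : 0 < r) (s' : ℕ) (hs' : 1 ≤ s') (hJ : J.card ≤ s') (κ' : ℝ) (hκ' : 0 < κ')
    (hRE : Δ ≠ 0 → (∑ j ∈ Jᶜ, |Δ j|) ≤ 3 * ∑ j ∈ J, |Δ j| →
      κ' * Real.sqrt N * Real.sqrt (∑ j ∈ J, (Δ j) ^ 2) ≤
        Real.sqrt (∑ i, (X.mulVec Δ i) ^ 2))
    (h : (∑ i, X.mulVec Δ i ^ 2) / N + r * ∑ j, |Δ j| ≤ 4 * r * ∑ j ∈ J, |Δ j|) :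
    ∑ j, |Δ j| ≤ 4 * s' / κ' ^ 2 * r := by
  by_cases h0 : Δ = 0
  · subst h0
    simp only [Pi.zero_apply, abs_zero, Finset.sum_const_zero]
    positivity
  have hNp : (0 : ℝ) < N := by exact_mod_cast hN
  have hsp : (0 : ℝ) < s' := by exact_mod_cast hs'
  have hPn : 0 ≤ (∑ i, X.mulVec Δ i ^ 2) / N :=
    div_nonneg (Finset.sum_nonneg fun i _ => sq_nonneg _) hNp.le
  have hle : ∑ j, |Δ j| ≤ 4 * ∑ j ∈ J, |Δ j| := by
    refine le_of_mul_le_mul_left ?_ hr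
    linarith
  have hcone : (∑ j ∈ Jᶜ, |Δ j|) ≤ 3 * ∑ j ∈ J, |Δ j| := by
    have := Finset.sum_add_sum_compl J fun j => |Δ j|
    linarith
  have hre := hRE h0 hcone
  have hre2 : κ' ^ 2 * ∑ j ∈ J, (Δ j) ^ 2 ≤ (∑ i, X.mulVec Δ i ^ 2) / N := by
    have h2 := pow_le_pow_left₀ (by positivity) hre 2
    rw [mul_pow, mul_pow, Real.sq_sqrt hNp.le,
      Real.sq_sqrt (Finset.sum_nonneg fun i _ => sq_nonneg _),
      Real.sq_sqrt (Finset.sum_nonneg fun i _ => sq_nonneg _)] at h2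
    rw [le_div_iff₀ hNp]
    linarith
  have hcs : (∑ j ∈ J, |Δ j|) ^ 2 ≤ s' * ∑ j ∈ J, (Δ j) ^ 2 := by
    have h1 := sq_sum_le_card_mul_sum_sq (s := J) (f := fun j => |Δ j|)
    simp only [sq_abs] at h1
    refine h1.trans (mul_le_mul_of_nonneg_right (by exact_mod_cast hJ)
      (Finset.sum_nonneg fun i _ => sq_nonneg _))
  set S := ∑ j ∈ J, |Δ j|
  set D := ∑ j ∈ J, (Δ j) ^ 2
  set L := ∑ j, |Δ j|
  have h1 : κ' ^ 2 * D + r * L ≤ 4 * r * S := by linarith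
  rw [div_mul_eq_mul_div, le_div_iff₀ (by positivity)]
  -- Maximizing `4 S - κ'² S² / (s' r)` over `S`, i.e. completing the square `(κ'² S - 2 s' r)²`.
  have h2 : r * (L * κ' ^ 2) ≤ r * (4 * s' * r) := by
    refine le_of_mul_le_mul_left ?_ hsp
    have h3 := mul_le_mul_of_nonneg_left h1 (by positivity : 0 ≤ s' * κ' ^ 2)
    have h4 := mul_le_mul_of_nonneg_left hcs (by positivity : 0 ≤ κ' ^ 4)
    nlinarith [sq_nonneg (κ' ^ 2 * S - 2 * s' * r)]
  exact le_of_mul_le_mul_left h2 hr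

/-- On the noise event, the support of the truth is contained in that of every solution. -/
lemma support_subset {N K : ℕ} (hN : 1 ≤ N)
    (X : Matrix (Fin N) (Fin K) ℝ) (βstar : Fin K → ℝ) (w : Fin N → ℝ)
    (r : ℝ) (hr : 0 < r) (s' : ℕ) (hs' : 1 ≤ s') (κ' : ℝ) (hκ' : 0 < κ')
    (hRE : ∀ J : Finset (Fin K), J.card ≤ s' → ∀ Δ : Fin K → ℝ, Δ ≠ 0 →
      (∑ j ∈ Jᶜ, |Δ j|) ≤ 3 * ∑ j ∈ J, |Δ j| →
      κ' * Real.sqrt N * Real.sqrt (∑ j ∈ J, (Δ j) ^ 2) ≤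
        Real.sqrt (∑ i, (X.mulVec Δ i) ^ 2))
    (hβs' : (Finset.univ.filter (fun j => βstar j ≠ 0)).card ≤ s')
    (hmin : ∀ j, βstar j ≠ 0 →
      (3 / 2 + 16 * s' / κ' ^ 2 * sSup {x | ∃ j' k : Fin K, j' ≠ k ∧ x = |PsiEnt X j' k|}) * r <
        |PsiEnt X j j * βstar j|)
    (hw : ∀ j, |(∑ i, X i j * w i) / N| ≤ r / 2)
    (b : Fin K → ℝ) (hb : IsLassoSol X (fun i => X.mulVec βstar i + w i) r b)
    (j : Fin K) (hj : βstar j ≠ 0) : b j ≠ 0 := by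
  intro hbj
  set m := sSup {x | ∃ j' k : Fin K, j' ≠ k ∧ x = |PsiEnt X j' k|} with hm
  have hbdd : BddAbove {x | ∃ j' k : Fin K, j' ≠ k ∧ x = |PsiEnt X j' k|} := by
    refine Set.Finite.bddAbove ((Set.finite_range
      (fun p : Fin K × Fin K => |PsiEnt X p.1 p.2|)).subset ?_)
    rintro x ⟨j', k, _, rfl⟩
    exact ⟨(j', k), rfl⟩
  have hm0 : 0 ≤ m := Real.sSup_nonneg (by rintro x ⟨j', k, _, rfl⟩; exact abs_nonneg _)
  have hL : ∑ k, |(b - βstar) k| ≤ 4 * s' / κ' ^ 2 * r :=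
    l1_bound hN X (b - βstar) _ r hr s' hs' hβs' κ' hκ' (hRE _ hβs' (b - βstar))
      (basic_ineq X βstar w r hr.le hw b hb)
  have hk := kkt X _ r hr.le b hb j
  -- The `j`-th coordinate of `ΨΔ` is the half-gradient of the loss at `b` plus the noise score.
  have e1 : ∑ k, PsiEnt X j k * (b - βstar) k =
      (∑ i, X i j * (X.mulVec b i - (X.mulVec βstar i + w i))) / N + (∑ i, X i j * w i) / N := by
    have e : ∑ k, PsiEnt X j k * (b - βstar) k = (∑ i, X.mulVec (b - βstar) i * X i j) / N := by
      rw [sum_mulVec_mul, Finset.sum_div]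
      refine Finset.sum_congr rfl fun k _ => ?_
      unfold PsiEnt
      rw [div_mul_eq_mul_div, mul_comm]
      congr 2
      exact Finset.sum_congr rfl fun i _ => by ring
    rw [e, ← add_div, ← Finset.sum_add_distrib]
    congr 1
    refine Finset.sum_congr rfl fun i _ => ?_
    rw [Matrix.mulVec_sub, Pi.sub_apply]
    ring
  have e2 : |∑ k, PsiEnt X j k * (b - βstar) k| ≤ 3 / 2 * r := by
    rw [e1]
    refine (abs_add_le _ _).trans ?_
    linarith [hw j]
  have e3 := Finset.add_sum_erase Finset.univ (fun k => PsiEnt X j k * (b - βstar) k)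
    (Finset.mem_univ j)
  have e4 : |∑ k ∈ Finset.univ.erase j, PsiEnt X j k * (b - βstar) k| ≤
      m * ∑ k, |(b - βstar) k| := by
    calc _ ≤ ∑ k ∈ Finset.univ.erase j, |PsiEnt X j k * (b - βstar) k| :=
          Finset.abs_sum_le_sum_abs _ _
      _ ≤ ∑ k ∈ Finset.univ.erase j, m * |(b - βstar) k| := by
          refine Finset.sum_le_sum fun k hk' => ?_
          rw [abs_mul]
          refine mul_le_mul_of_nonneg_right (le_csSup hbdd ?_) (abs_nonneg _)
          exact ⟨j, k, (Finset.ne_of_mem_erase hk').symm, rfl⟩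
      _ ≤ ∑ k, m * |(b - βstar) k| :=
          Finset.sum_le_sum_of_subset_of_nonneg (Finset.subset_univ _)
            fun k _ _ => mul_nonneg hm0 (abs_nonneg _)
      _ = _ := by rw [Finset.mul_sum]
  have e5 : |PsiEnt X j j * βstar j| ≤ 3 / 2 * r + m * ∑ k, |(b - βstar) k| := by
    have e6 : PsiEnt X j j * βstar j =
        ∑ k ∈ Finset.univ.erase j, PsiEnt X j k * (b - βstar) k -
          ∑ k, PsiEnt X j k * (b - βstar) k := by
      rw [← e3]
      simp [hbj]
    rw [e6]
    refine (abs_sub _ _).trans ?_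
    linarith
  have h7 := hmin j hj
  have h8 := mul_le_mul_of_nonneg_left hL hm0
  have h9 : 0 ≤ s' / κ' ^ 2 * m * r := by positivity
  have h10 : (3 / 2 + 16 * s' / κ' ^ 2 * m) * r = 3 / 2 * r + 16 * (s' / κ' ^ 2 * m * r) := by ring
  have h11 : m * (4 * s' / κ' ^ 2 * r) = 4 * (s' / κ' ^ 2 * m * r) := by ring
  linarith

/-! ### Probability of the noise event -/

/-- The event that some column score exceeds the level `r / 2`. -/
def badNoise {N K : ℕ} (X : Matrix (Fin N) (Fin K) ℝ) (r : ℝ) : Set (Fin N → ℝ) :=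
  ⋃ j, {w | r / 2 < |(∑ i, X i j * w i) / N|}

lemma measurableSet_badNoise {N K : ℕ} (X : Matrix (Fin N) (Fin K) ℝ) (r : ℝ) :
    MeasurableSet (badNoise X r) :=
  MeasurableSet.iUnion fun j => measurableSet_lt measurable_const (by fun_prop)

lemma badNoise_measure {N K : ℕ} (hN : 1 ≤ N) (hK : 1 ≤ K) (X : Matrix (Fin N) (Fin K) ℝ)
    (σ : ℝ) (hσ : 0 < σ) (A r : ℝ) (hr0 : 0 ≤ r)
    (hr : r = A * σ * Real.sqrt (phiDiag X * Real.log K / N)) (hφ : 0 < phiDiag X) :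
    (Measure.pi fun _ : Fin N => gaussianReal 0 (σ ^ 2).toNNReal) (badNoise X r) ≤
      ENNReal.ofReal ((K : ℝ) ^ ((1 : ℝ) - A ^ 2 / 8)) := by
  have hNp : (0 : ℝ) < N := by exact_mod_cast hN
  have hKp : (0 : ℝ) < K := by exact_mod_cast hK
  have hlog : 0 ≤ Real.log K := Real.log_natCast_nonneg K
  have hr2 : r ^ 2 = A ^ 2 * σ ^ 2 * (phiDiag X * Real.log K / N) := by
    rw [hr, mul_pow, mul_pow, Real.sq_sqrt (by positivity)]
  have hPsi : ∀ j, PsiEnt X j j ≤ phiDiag X := by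
    intro j
    refine le_csSup (Set.Finite.bddAbove ((Set.finite_range
      (fun j => PsiEnt X j j)).subset ?_)) ⟨j, rfl⟩
    rintro x ⟨k, rfl⟩
    exact ⟨k, rfl⟩
  have hone : ∀ j, (Measure.pi fun _ : Fin N => gaussianReal 0 (σ ^ 2).toNNReal)
      {w | r / 2 < |(∑ i, X i j * w i) / N|} ≤
      ENNReal.ofReal (Real.exp (-(A ^ 2 * Real.log K / 8))) := by
    intro j
    have hm := map_sum_gaussian (σ ^ 2).toNNReal (fun i => X i j) Finset.univ
    have hset : {w : Fin N → ℝ | r / 2 < |(∑ i, X i j * w i) / N|} =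
        (∑ i, fun w : Fin N → ℝ => X i j * w i) ⁻¹' {x | N * (r / 2) < |x|} := by
      ext w
      simp only [Set.mem_ofPred_eq, Set.mem_preimage, Finset.sum_apply]
      rw [abs_div, Nat.abs_cast, lt_div_iff₀ hNp, mul_comm]
    rw [hset, ← Measure.map_apply (by fun_prop)
      (measurableSet_lt measurable_const (by fun_prop)), hm]
    refine (gaussian_tail _ (N * phiDiag X * σ ^ 2) (N * (r / 2)) ?_ (by positivity)).trans ?_
    · have h1 := hPsi j
      unfold PsiEnt at h1
      rw [div_le_iff₀ hNp] at h1
      rw [NNReal.coe_sum]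
      simp only [NNReal.coe_mul, NNReal.coe_mk, Real.coe_toNNReal _ (sq_nonneg σ)]
      rw [← Finset.sum_mul]
      refine mul_le_mul_of_nonneg_right ?_ (sq_nonneg _)
      simp only [pow_two]
      linarith
    · refine ENNReal.ofReal_le_ofReal (le_of_eq ?_)
      congr 1
      rw [mul_pow, div_pow, hr2]
      field_simp
      norm_num
  refine (measure_iUnion_le _).trans ?_
  rw [tsum_fintype]
  refine (Finset.sum_le_sum fun j _ => hone j).trans ?_
  rw [Finset.sum_const, Finset.card_univ, Fintype.card_fin, nsmul_eq_mul,
    ← ENNReal.ofReal_natCast, ← ENNReal.ofReal_mul hKp.le]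
  refine ENNReal.ofReal_le_ofReal (le_of_eq ?_)
  rw [Real.rpow_sub hKp, Real.rpow_one, Real.rpow_def_of_pos hKp, div_eq_mul_inv (K : ℝ),
    ← Real.exp_neg]
  congr 3
  ring

/-- if moreover `M'(β*) ≤ s'` and the nonzero coefficients of `β*` are large
enough, then with probability at least `1 − K^{1−A²/8}`, every Lasso solution `β̂^L`
satisfies `M'(β̂^L) ≥ M'(β*)`. -/
theorem lasso_sparsity_lower_bound
    {N K : ℕ} (hN : 1 ≤ N) (hK : 1 ≤ K)
    (X : Matrix (Fin N) (Fin K) ℝ) (βstar : Fin K → ℝ)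
    {Ω : Type*} [MeasurableSpace Ω] (μ : Measure Ω) [IsProbabilityMeasure μ]
    (W : Ω → Fin N → ℝ) (σ : ℝ) (hσ : 0 < σ)
    (hW : Measure.map W μ = Measure.pi fun _ : Fin N => gaussianReal 0 (σ ^ 2).toNNReal)
    (A : ℝ) (hA : 2 * Real.sqrt 2 < A) (r : ℝ)
    (hr : r = A * σ * Real.sqrt (phiDiag X * Real.log K / N))
    (s' : ℕ) (hs' : 1 ≤ s') (κ' : ℝ) (hκ' : 0 < κ')
    (hRE : ∀ J : Finset (Fin K), J.card ≤ s' → ∀ Δ : Fin K → ℝ, Δ ≠ 0 →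
      (∑ j ∈ Jᶜ, |Δ j|) ≤ 3 * ∑ j ∈ J, |Δ j| →
      κ' * Real.sqrt N * Real.sqrt (∑ j ∈ J, (Δ j) ^ 2) ≤
        Real.sqrt (∑ i, (X.mulVec Δ i) ^ 2))
    (hβs' : (Finset.univ.filter (fun j => βstar j ≠ 0)).card ≤ s')
    (hmin : ∀ j, βstar j ≠ 0 →
      (3 / 2 + 16 * s' / κ' ^ 2 * sSup {x | ∃ j' k : Fin K, j' ≠ k ∧ x = |PsiEnt X j' k|}) * r <
        |PsiEnt X j j * βstar j|) :
    ∃ Ev : Set Ω, MeasurableSet Ev ∧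
      1 - (K : ℝ) ^ ((1 : ℝ) - A ^ 2 / 8) ≤ (μ Ev).toReal ∧
      ∀ ω ∈ Ev, ∀ b : Fin K → ℝ,
        IsLassoSol X (fun i => X.mulVec βstar i + W ω i) r b →
        (Finset.univ.filter (fun j => βstar j ≠ 0)).card ≤
          (Finset.univ.filter (fun j => b j ≠ 0)).card := by
  classical
  by_cases hβ0 : ∀ j, βstar j = 0
  · refine ⟨Set.univ, MeasurableSet.univ, ?_, fun ω _ b _ => by simp [hβ0]⟩
    have := Real.rpow_nonneg (Nat.cast_nonneg K : (0 : ℝ) ≤ K) (1 - A ^ 2 / 8)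
    simp [this]
  push Not at hβ0
  obtain ⟨j0, hj0⟩ := hβ0
  rcases hK.eq_or_lt with hK1 | hK2
  · exact ⟨∅, MeasurableSet.empty, by simp [← hK1], fun ω hω => hω.elim⟩
  have hNp : (0 : ℝ) < N := by exact_mod_cast hN
  have hAp : 0 < A := lt_trans (by positivity) hA
  have hr0 : 0 ≤ r := by rw [hr]; positivity
  have hm0 : 0 ≤ sSup {x | ∃ j' k : Fin K, j' ≠ k ∧ x = |PsiEnt X j' k|} :=
    Real.sSup_nonneg (by rintro x ⟨j', k, _, rfl⟩; exact abs_nonneg _)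
  -- The strict lower bound on `|Ψ_jj β*_j|` forces `Ψ_jj`, hence `φ` and `r`, to be positive.
  have hφ : 0 < phiDiag X := by
    have h1 : 0 < |PsiEnt X j0 j0 * βstar j0| := lt_of_le_of_lt (by positivity) (hmin j0 hj0)
    have h2 : PsiEnt X j0 j0 ≠ 0 := left_ne_zero_of_mul (abs_pos.1 h1)
    have h3 : 0 ≤ PsiEnt X j0 j0 :=
      div_nonneg (Finset.sum_nonneg fun i _ => mul_self_nonneg _) (Nat.cast_nonneg _)
    refine (lt_of_le_of_ne h3 h2.symm).trans_le (le_csSup (Set.Finite.bddAbove ((Set.finite_range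
      (fun j => PsiEnt X j j)).subset ?_)) ⟨j0, rfl⟩)
    rintro x ⟨k, rfl⟩
    exact ⟨k, rfl⟩
  have hlog : 0 < Real.log K := Real.log_pos (by exact_mod_cast hK2)
  have hrp : 0 < r := by rw [hr]; positivity
  -- The law of `W` is a probability measure, so `W` is a.e.-measurable: otherwise `map` is zero.
  have hWm : AEMeasurable W μ := by
    apply AEMeasurable.of_map_ne_zero
    rw [hW]
    exact NeZero.ne _
  have hbad : μ (W ⁻¹' badNoise X r) ≤ ENNReal.ofReal ((K : ℝ) ^ ((1 : ℝ) - A ^ 2 / 8)) := by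
    rw [← Measure.map_apply_of_aemeasurable hWm (measurableSet_badNoise X r), hW]
    exact badNoise_measure hN hK X σ hσ A r hr0 hr hφ
  -- `W` need not be measurable, so the bad event is replaced by a measurable hull.
  refine ⟨(toMeasurable μ (W ⁻¹' badNoise X r))ᶜ, (measurableSet_toMeasurable _ _).compl, ?_, ?_⟩
  · have h1 := probReal_compl_eq_one_sub (μ := μ) (measurableSet_toMeasurable μ (W ⁻¹' badNoise X r))
    rw [measureReal_def, measureReal_def, measure_toMeasurable] at h1
    rw [h1]
    have h2 := ENNReal.toReal_mono ENNReal.ofReal_ne_top hbad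
    rw [ENNReal.toReal_ofReal (by positivity)] at h2
    linarith
  · intro ω hω b hb
    have hgood : ∀ j, |(∑ i, X i j * W ω i) / N| ≤ r / 2 := by
      intro j
      by_contra! hlt
      exact hω (subset_toMeasurable _ _ (Set.mem_iUnion.2 ⟨j, hlt⟩))
    refine Finset.card_le_card fun j hj => ?_
    rw [Finset.mem_filter] at hj ⊢
    exact ⟨hj.1, support_subset hN X βstar (W ω) r hrp s' hs' κ' hκ' hRE hβs' hmin hgood b hb j hj.2⟩

end Lasso
end
end

section
/- If Assumption MC(s,α) holds with α > 1, then Assumption RE(s) is satisfied with κ = √((1 − 1/α)·φ); that is, for every index set J ⊆ {1,…,M} with |J| ≤ s and every Δ ∈ ℝ^K∖{0} satisfying Σ_{j∉J} λ_j‖Δ^j‖ ≤ 3·Σ_{j∈J} λ_j‖Δ^j‖, one has ‖XΔ‖ ≥ √((1 − 1/α)·φ)·√N·‖Δ_J‖. -/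
/-!
The quantity `‖XΔ‖² / N` is the quadratic form `∑ B j j'`, where `B j j' = Δ^jᵀ Ψ[j,j'] Δ^{j'}`.
With `ε = λ_min φ / (14 α λ_max s)`, coherence and the Cauchy–Schwarz inequality give
`|B j j' - φ ‖Δ^j‖² [j = j']| ≤ 2 ε ‖Δ^j‖ ‖Δ^{j'}‖` (`abs_block_le`): the entries with equal
position inside their groups contribute at most `ε`, the remaining ones at most another `ε`.

Writing `XΔ = XΔ_J + XΔ_{Jᶜ}` and discarding `‖XΔ_{Jᶜ}‖² ≥ 0`, one gets
`‖XΔ‖² / N ≥ φ ‖Δ_J‖² - 2 ε A² - 4 ε A C` with `A = ∑_{j ∈ J} ‖Δ^j‖` and `C = ∑_{j ∉ J} ‖Δ^j‖`.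
The cone condition yields `C ≤ 3 (λ_max / λ_min) A`, and `A² ≤ s ‖Δ_J‖²`, so the loss is at most
`14 ε s (λ_max / λ_min) ‖Δ_J‖² = (φ / α) ‖Δ_J‖²` (`coherence_arith`). Discarding the `Jᶜ` block
is what keeps the loss linear in `λ_max / λ_min`.
-/

open MeasureTheory ProbabilityTheory Finset

noncomputable section

namespace GroupLasso

/-- The index set `{1,…,K}` partitioned into `M` groups, the `j`-th of size `Kj j`. -/
abbrev GIdx {M : ℕ} (Kj : Fin M → ℕ) : Type := (j : Fin M) × Fin (Kj j)

/-- Euclidean norm `‖β^j‖` of the `j`-th group of coefficients. -/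
def gnorm {M : ℕ} {Kj : Fin M → ℕ} (β : GIdx Kj → ℝ) (j : Fin M) : ℝ :=
  Real.sqrt (∑ t, (β ⟨j, t⟩) ^ 2)

/-- Entry `(t,t')` of the cross Gram matrix `Ψ[j,j'] = X_{G_j}ᵀ X_{G_{j'}} / N`. -/
def psiEnt {N M : ℕ} {Kj : Fin M → ℕ} (X : Matrix (Fin N) (GIdx Kj) ℝ) (j j' : Fin M)
    (t : Fin (Kj j)) (t' : Fin (Kj j')) : ℝ :=
  (∑ i, X i ⟨j, t⟩ * X i ⟨j', t'⟩) / N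

/-- A bilinear form whose coefficients are at most `ε` at equal positions and at most `ε / √(mn)`
elsewhere is bounded by `2 ε ‖a‖ ‖b‖`: one `ε` comes from Cauchy–Schwarz along the partial diagonal
`{t = t'}`, the other from `‖a‖₁ ≤ √m ‖a‖` and `‖b‖₁ ≤ √n ‖b‖`. -/
lemma abs_block_le {m n : ℕ} (hm : 1 ≤ m) (hn : 1 ≤ n) (P : Fin m → Fin n → ℝ)
    (a : Fin m → ℝ) (b : Fin n → ℝ) {ε : ℝ} (hε : 0 ≤ ε)
    (hd : ∀ (t : Fin m) (t' : Fin n), (t : ℕ) = (t' : ℕ) → |P t t'| ≤ ε)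
    (ho : ∀ (t : Fin m) (t' : Fin n), (t : ℕ) ≠ (t' : ℕ) → |P t t'| ≤ ε / Real.sqrt (m * n)) :
    |∑ t, ∑ t', P t t' * (a t * b t')| ≤
      2 * ε * (Real.sqrt (∑ t, a t ^ 2) * Real.sqrt (∑ t, b t ^ 2)) := by
  have hm0 : (0 : ℝ) < m := by exact_mod_cast hm
  have hn0 : (0 : ℝ) < n := by exact_mod_cast hn
  set c : Fin m → Fin n → ℝ := fun t t' => if (t : ℕ) = (t' : ℕ) then 1 else 0 with hc
  have hentry : ∀ t t', |P t t' * (a t * b t')| ≤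
      ε * (c t t' * (|a t| * |b t'|)) + ε / Real.sqrt (m * n) * (|a t| * |b t'|) := by
    intro t t'
    rw [abs_mul, abs_mul]
    have h0 : 0 ≤ |a t| * |b t'| := by positivity
    have h1 : 0 ≤ ε / Real.sqrt (m * n) := by positivity
    by_cases h : (t : ℕ) = (t' : ℕ)
    · have := mul_le_mul_of_nonneg_right (hd t t' h) h0
      simp only [hc, h, if_true]
      nlinarith [mul_nonneg h1 h0]
    · have := mul_le_mul_of_nonneg_right (ho t t' h) h0
      simp only [hc, h, if_false]
      linarith
  have hdiag : ∑ t, ∑ t', c t t' * (|a t| * |b t'|) ≤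
      Real.sqrt (∑ t, a t ^ 2) * Real.sqrt (∑ t, b t ^ 2) := by
    have hcs := Real.sum_mul_le_sqrt_mul_sqrt (univ : Finset (Fin m × Fin n))
      (fun p => c p.1 p.2 * |a p.1|) (fun p => c p.1 p.2 * |b p.2|)
    have hcc : ∀ t t', c t t' * c t t' = c t t' := by
      intro t t'; simp only [hc]; split_ifs <;> simp
    have e1 : ∑ t, ∑ t', c t t' * (|a t| * |b t'|) =
        ∑ p : Fin m × Fin n, c p.1 p.2 * |a p.1| * (c p.1 p.2 * |b p.2|) := by
      rw [Fintype.sum_prod_type]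
      refine sum_congr rfl fun t _ => sum_congr rfl fun t' _ => ?_
      calc _ = (c t t' * c t t') * (|a t| * |b t'|) := by rw [hcc]
        _ = _ := by ring
    have hrow : ∀ t, ∑ t', c t t' ≤ 1 := by
      intro t
      simp only [hc, sum_boole]
      have : #{x : Fin n | (t : ℕ) = (x : ℕ)} ≤ 1 := by
        refine card_le_one.2 fun x hx y hy => ?_
        simp only [mem_filter, mem_univ, true_and] at hx hy
        exact Fin.ext (hx.symm.trans hy)
      exact_mod_cast this
    have hcol : ∀ t', ∑ t, c t t' ≤ 1 := by
      intro t
      simp only [hc, sum_boole]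
      have : #{x : Fin m | (x : ℕ) = (t : ℕ)} ≤ 1 := by
        refine card_le_one.2 fun x hx y hy => ?_
        simp only [mem_filter, mem_univ, true_and] at hx hy
        exact Fin.ext (hx.trans hy.symm)
      exact_mod_cast this
    have ea : ∑ p : Fin m × Fin n, (c p.1 p.2 * |a p.1|) ^ 2 ≤ ∑ t, a t ^ 2 := by
      rw [Fintype.sum_prod_type]
      refine sum_le_sum fun t _ => ?_
      calc ∑ t', (c t t' * |a t|) ^ 2 = (∑ t', c t t') * a t ^ 2 := by
            rw [sum_mul]
            refine sum_congr rfl fun t' _ => ?_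
            rw [mul_pow, sq_abs, pow_two (c t t'), hcc]
        _ ≤ 1 * a t ^ 2 := mul_le_mul_of_nonneg_right (hrow t) (sq_nonneg _)
        _ = _ := one_mul _
    have eb : ∑ p : Fin m × Fin n, (c p.1 p.2 * |b p.2|) ^ 2 ≤ ∑ t, b t ^ 2 := by
      rw [Fintype.sum_prod_type_right]
      refine sum_le_sum fun t' _ => ?_
      calc ∑ t, (c t t' * |b t'|) ^ 2 = (∑ t, c t t') * b t' ^ 2 := by
            rw [sum_mul]
            refine sum_congr rfl fun t _ => ?_
            rw [mul_pow, sq_abs, pow_two (c t t'), hcc]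
        _ ≤ 1 * b t' ^ 2 := mul_le_mul_of_nonneg_right (hcol t') (sq_nonneg _)
        _ = _ := one_mul _
    rw [e1]
    exact hcs.trans (mul_le_mul (Real.sqrt_le_sqrt ea) (Real.sqrt_le_sqrt eb)
      (Real.sqrt_nonneg _) (Real.sqrt_nonneg _))
  have hl1 : ∀ (k : ℕ) (v : Fin k → ℝ),
      ∑ t, |v t| ≤ Real.sqrt k * Real.sqrt (∑ t, v t ^ 2) := by
    intro k v
    simpa using Real.sum_mul_le_sqrt_mul_sqrt univ (fun _ => (1 : ℝ)) (fun t => |v t|)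
  have hall : ε / Real.sqrt (m * n) * ((∑ t, |a t|) * ∑ t, |b t|) ≤
      ε * (Real.sqrt (∑ t, a t ^ 2) * Real.sqrt (∑ t, b t ^ 2)) := by
    have h := mul_le_mul (hl1 m a) (hl1 n b) (sum_nonneg fun t _ => abs_nonneg (b t))
      (by positivity)
    have hs : 0 < Real.sqrt (m * n) := Real.sqrt_pos.2 (by positivity)
    rw [div_mul_eq_mul_div, div_le_iff₀ hs, mul_assoc]
    refine mul_le_mul_of_nonneg_left (h.trans (le_of_eq ?_)) hε
    rw [Real.sqrt_mul hm0.le]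
    ring
  calc |∑ t, ∑ t', P t t' * (a t * b t')|
      ≤ ∑ t, ∑ t', |P t t' * (a t * b t')| :=
        (abs_sum_le_sum_abs _ _).trans (sum_le_sum fun t _ => abs_sum_le_sum_abs _ _)
    _ ≤ ∑ t, ∑ t', (ε * (c t t' * (|a t| * |b t'|)) +
          ε / Real.sqrt (m * n) * (|a t| * |b t'|)) :=
        sum_le_sum fun t _ => sum_le_sum fun t' _ => hentry t t'
    _ = ε * (∑ t, ∑ t', c t t' * (|a t| * |b t'|)) +
          ε / Real.sqrt (m * n) * ((∑ t, |a t|) * ∑ t, |b t|) := by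
        rw [sum_mul_sum]
        simp only [sum_add_distrib, mul_sum]
    _ ≤ _ := by linarith [mul_le_mul_of_nonneg_left hdiag hε]

/-- The numerical step: with `m ≤ L` the extreme weights, `A` and `C` the sums of the group norms
over `J` and `Jᶜ`, and `S = ‖Δ_J‖²`, the coherence losses do not exceed `(φ / α) S`. -/
lemma coherence_arith {m L φ α s A C S : ℝ} (hm : 0 < m) (hmL : m ≤ L) (hφ : 0 < φ)
    (hα : 0 < α) (hs : 0 < s) (hA : 0 ≤ A) (hC : m * C ≤ 3 * (L * A)) (hAS : A ^ 2 ≤ s * S) :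
    2 * (m * φ / (14 * α * L * s)) * A ^ 2 + 4 * (m * φ / (14 * α * L * s)) * (A * C) ≤
      φ / α * S := by
  have hL : 0 < L := hm.trans_le hmL
  have h1 : m * A ^ 2 ≤ L * A ^ 2 := mul_le_mul_of_nonneg_right hmL (sq_nonneg A)
  have h2 : A * (m * C) ≤ A * (3 * (L * A)) := mul_le_mul_of_nonneg_left hC hA
  have h3 : L * A ^ 2 ≤ L * (s * S) := mul_le_mul_of_nonneg_left hAS hL.le
  have h4 : 2 * (m * A ^ 2) + 4 * (A * (m * C)) ≤ 14 * (L * (s * S)) := by nlinarith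
  have h5 := mul_le_mul_of_nonneg_left h4 (show 0 ≤ φ / (14 * α * L * s) by positivity)
  calc _ = φ / (14 * α * L * s) * (2 * (m * A ^ 2) + 4 * (A * (m * C))) := by ring
    _ ≤ _ := h5
    _ = _ := by field_simp

/-- the coherence assumption MC(s,α) implies the restricted eigenvalue
assumption RE(s) with `κ = √((1 − 1/α)·φ)`. -/
theorem mutual_coherence_implies_restricted_eigenvalue
    {N M : ℕ} {Kj : Fin M → ℕ} (hKj : ∀ j, 1 ≤ Kj j)
    (X : Matrix (Fin N) (GIdx Kj) ℝ)
    (lam : Fin M → ℝ) (hlam_pos : ∀ j, 0 < lam j)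
    (s : ℕ) (hs : 1 ≤ s)
    (α φ : ℝ) (hα : 1 < α) (hφ : 0 < φ)
    (hMCdiag : ∀ j t, psiEnt X j j t t = φ)
    (hMCoff : ∀ j, ∀ t t' : Fin (Kj j), (t : ℕ) ≠ (t' : ℕ) →
      |psiEnt X j j t t'| ≤
        sInf (Set.range lam) * φ / (14 * α * sSup (Set.range lam) * s * Kj j))
    (hMCdiag' : ∀ j j', j ≠ j' → ∀ (t : Fin (Kj j)) (t' : Fin (Kj j')), (t : ℕ) = (t' : ℕ) →
      |psiEnt X j j' t t'| ≤ sInf (Set.range lam) * φ / (14 * α * sSup (Set.range lam) * s))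
    (hMCoff' : ∀ j j', j ≠ j' → ∀ (t : Fin (Kj j)) (t' : Fin (Kj j')), (t : ℕ) ≠ (t' : ℕ) →
      |psiEnt X j j' t t'| ≤ sInf (Set.range lam) * φ /
        (14 * α * sSup (Set.range lam) * s * Real.sqrt (Kj j * Kj j'))) :
    ∀ J : Finset (Fin M), J.card ≤ s → ∀ Δ : GIdx Kj → ℝ, Δ ≠ 0 →
      (∑ j ∈ Jᶜ, lam j * gnorm Δ j) ≤ 3 * ∑ j ∈ J, lam j * gnorm Δ j →
      Real.sqrt ((1 - 1 / α) * φ) * Real.sqrt N *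
          Real.sqrt (∑ j ∈ J, (gnorm Δ j) ^ 2) ≤
        Real.sqrt (∑ i, (X.mulVec Δ i) ^ 2) := by
  intro J hJ Δ hΔ hcone
  obtain ⟨⟨j₀, -⟩, -⟩ := Function.ne_iff.1 hΔ
  have hfin := Set.finite_range lam
  have hne : (Set.range lam).Nonempty := ⟨lam j₀, j₀, rfl⟩
  set m := sInf (Set.range lam) with hm_def
  set L := sSup (Set.range lam) with hL_def
  have hmle : ∀ j, m ≤ lam j := fun j => csInf_le hfin.bddBelow ⟨j, rfl⟩
  have hleL : ∀ j, lam j ≤ L := fun j => le_csSup hfin.bddAbove ⟨j, rfl⟩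
  have hm : 0 < m := by
    obtain ⟨j, hj⟩ := hne.csInf_mem hfin
    rw [hm_def, ← hj]
    exact hlam_pos j
  have hmL : m ≤ L := (hmle j₀).trans (hleL j₀)
  have hL : 0 < L := hm.trans_le hmL
  have hα0 : 0 < α := one_pos.trans hα
  have hs0 : (0 : ℝ) < s := by exact_mod_cast hs
  set ε := m * φ / (14 * α * L * s) with hε_def
  have hε : 0 ≤ ε := by positivity
  have hg0 : ∀ j, 0 ≤ gnorm Δ j := fun j => Real.sqrt_nonneg _
  have hgsq : ∀ j, gnorm Δ j ^ 2 = ∑ t, Δ ⟨j, t⟩ ^ 2 := fun j =>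
    Real.sq_sqrt (sum_nonneg fun t _ => sq_nonneg _)
  set B : Fin M → Fin M → ℝ := fun j j' =>
    ∑ t, ∑ t', psiEnt X j j' t t' * (Δ ⟨j, t⟩ * Δ ⟨j', t'⟩) with hB
  have hBoff : ∀ j j', j ≠ j' → |B j j'| ≤ 2 * ε * (gnorm Δ j * gnorm Δ j') := by
    intro j j' hjj
    refine abs_block_le (hKj j) (hKj j') _ (fun t => Δ ⟨j, t⟩) (fun t => Δ ⟨j', t⟩) hε
      (hMCdiag' j j' hjj) fun t t' h => ?_
    rw [hε_def, div_div]
    exact hMCoff' j j' hjj t t' h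
  have hBdiag : ∀ j, |B j j - φ * gnorm Δ j ^ 2| ≤ 2 * ε * (gnorm Δ j * gnorm Δ j) := by
    intro j
    -- Subtracting `φ` on the diagonal leaves entries of size at most `ε / K_j`, with
    -- `√(K_j * K_j) = K_j`, so the block estimate for distinct groups applies here too.
    have e : B j j - φ * gnorm Δ j ^ 2 = ∑ t, ∑ t',
        (psiEnt X j j t t' - if t = t' then φ else 0) * (Δ ⟨j, t⟩ * Δ ⟨j, t'⟩) := by
      simp only [hB, sub_mul, sum_sub_distrib, ite_mul, zero_mul, sum_ite_eq, mem_univ, if_true,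
        hgsq, mul_sum, pow_two]
    rw [e]
    refine abs_block_le (hKj j) (hKj j) _ (fun t => Δ ⟨j, t⟩) (fun t => Δ ⟨j, t⟩) hε
      (fun t t' h => ?_) (fun t t' h => ?_)
    · obtain rfl := Fin.ext h
      simpa [hMCdiag] using hε
    · have h' : t ≠ t' := fun e => h (congrArg Fin.val e)
      rw [if_neg h', sub_zero, Real.sqrt_mul_self (Nat.cast_nonneg _), hε_def, div_div]
      exact hMCoff j t t' h
  set w : Fin M → Fin N → ℝ := fun j i => ∑ t, X i ⟨j, t⟩ * Δ ⟨j, t⟩ with hw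
  have hXw : ∀ i, X.mulVec Δ i = ∑ j ∈ J, w j i + ∑ j ∈ Jᶜ, w j i := by
    intro i
    rw [sum_add_sum_compl]
    simp only [Matrix.mulVec, dotProduct, hw]
    exact Fintype.sum_sigma _
  -- For `N = 0` the normalisation in `psiEnt` is a division by zero; the left side vanishes.
  rcases Nat.eq_zero_or_pos N with hN | hN
  · have : (N : ℝ) = 0 := by exact_mod_cast hN
    rw [this, Real.sqrt_zero, mul_zero, zero_mul]
    exact Real.sqrt_nonneg _
  have hN0 : (0 : ℝ) < N := by exact_mod_cast hN
  have hww : ∀ j j', ∑ i, w j i * w j' i = N * B j j' := by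
    intro j j'
    simp only [hw, hB, sum_mul_sum]
    simp only [mul_sum]
    rw [sum_comm]
    refine sum_congr rfl fun t _ => ?_
    rw [sum_comm]
    refine sum_congr rfl fun t' _ => ?_
    have : (N : ℝ) * (psiEnt X j j' t t' * (Δ ⟨j, t⟩ * Δ ⟨j', t'⟩)) =
        (∑ i, X i ⟨j, t⟩ * X i ⟨j', t'⟩) * (Δ ⟨j, t⟩ * Δ ⟨j', t'⟩) := by
      unfold psiEnt
      field_simp
    rw [this, sum_mul]
    exact sum_congr rfl fun i _ => by ring
  have hpair : ∀ S T : Finset (Fin M), ∑ i, (∑ j ∈ S, w j i) * (∑ j ∈ T, w j i) =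
      N * ∑ j ∈ S, ∑ j' ∈ T, B j j' := by
    intro S T
    simp only [sum_mul_sum]
    simp only [mul_sum, ← hww]
    rw [sum_comm]
    exact sum_congr rfl fun j _ => sum_comm
  set A := ∑ j ∈ J, gnorm Δ j with hA
  set C := ∑ j ∈ Jᶜ, gnorm Δ j with hC
  set S := ∑ j ∈ J, gnorm Δ j ^ 2 with hS
  have hsep : ∀ T : Finset (Fin M), ∑ j ∈ J, ∑ j' ∈ T, 2 * ε * (gnorm Δ j * gnorm Δ j') =
      2 * ε * (A * ∑ j ∈ T, gnorm Δ j) := by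
    intro T
    rw [hA, sum_mul_sum]
    simp only [mul_sum]
  have hJJ : φ * S - 2 * ε * A ^ 2 ≤ ∑ j ∈ J, ∑ j' ∈ J, B j j' := by
    have e : φ * S - 2 * ε * A ^ 2 = ∑ j ∈ J, ∑ j' ∈ J,
        ((if j = j' then φ * gnorm Δ j ^ 2 else 0) - 2 * ε * (gnorm Δ j * gnorm Δ j')) := by
      simp only [sum_sub_distrib, hsep, sum_ite_eq]
      rw [← hA, pow_two A, hS, mul_sum]
      congr 1
      exact sum_congr rfl fun j hj => by simp [hj]
    rw [e]
    refine sum_le_sum fun j _ => sum_le_sum fun j' _ => ?_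
    by_cases h : j = j'
    · subst h
      rw [if_pos rfl]
      linarith [(abs_le.1 (hBdiag j)).1]
    · rw [if_neg h]
      linarith [(abs_le.1 (hBoff j j' h)).1]
  have hJC : -(2 * ε * (A * C)) ≤ ∑ j ∈ J, ∑ j' ∈ Jᶜ, B j j' := by
    have e : -(2 * ε * (A * C)) =
        ∑ j ∈ J, ∑ j' ∈ Jᶜ, -(2 * ε * (gnorm Δ j * gnorm Δ j')) := by
      simp only [sum_neg_distrib, hsep, hC]
    rw [e]
    refine sum_le_sum fun j hj => sum_le_sum fun j' hj' => ?_
    have h : j ≠ j' := fun h => mem_compl.1 hj' (h ▸ hj)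
    exact (abs_le.1 (hBoff j j' h)).1
  have hCA : m * C ≤ 3 * (L * A) := by
    calc m * C ≤ ∑ j ∈ Jᶜ, lam j * gnorm Δ j := by
          rw [hC, mul_sum]
          exact sum_le_sum fun j _ => mul_le_mul_of_nonneg_right (hmle j) (hg0 j)
      _ ≤ 3 * ∑ j ∈ J, lam j * gnorm Δ j := hcone
      _ ≤ 3 * (L * A) := by
          rw [hA, mul_sum J _ L]
          have := sum_le_sum fun j (_ : j ∈ J) => mul_le_mul_of_nonneg_right (hleL j) (hg0 j)
          linarith
  have hS0 : 0 ≤ S := sum_nonneg fun j _ => sq_nonneg _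
  have hAS : A ^ 2 ≤ s * S :=
    sq_sum_le_card_mul_sum_sq.trans
      (mul_le_mul_of_nonneg_right (by exact_mod_cast hJ) hS0)
  have hloss := coherence_arith hm hmL hφ hα0 hs0 (sum_nonneg fun j _ => hg0 j) hCA hAS
  rw [← hε_def] at hloss
  have hcoef : 0 ≤ (1 - 1 / α) * φ :=
    mul_nonneg (sub_nonneg.2 ((div_le_one hα0).2 hα.le)) hφ.le
  rw [← Real.sqrt_mul hcoef, ← Real.sqrt_mul (mul_nonneg hcoef hN0.le)]
  refine Real.sqrt_le_sqrt ?_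
  -- The square of the `Jᶜ` part is dropped pointwise, via `a² + 2ab ≤ (a + b)²`.
  calc (1 - 1 / α) * φ * N * S = N * (φ * S - φ / α * S) := by ring
    _ ≤ N * (∑ j ∈ J, ∑ j' ∈ J, B j j' + 2 * ∑ j ∈ J, ∑ j' ∈ Jᶜ, B j j') :=
        mul_le_mul_of_nonneg_left (by linarith) hN0.le
    _ = ∑ i, ((∑ j ∈ J, w j i) * (∑ j ∈ J, w j i) +
          2 * ((∑ j ∈ J, w j i) * (∑ j ∈ Jᶜ, w j i))) := by
        rw [sum_add_distrib, ← mul_sum, hpair, hpair]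
        ring
    _ ≤ ∑ i, (X.mulVec Δ i) ^ 2 := by
        refine sum_le_sum fun i _ => ?_
        rw [hXw]
        nlinarith [sq_nonneg (∑ j ∈ Jᶜ, w j i)]

end GroupLasso
end
end
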